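/- Let w₁, w₂ > 0 and 0 < a < (w₁+w₂)/2, define G₂(a,w,t) = e^{(w₁+w₂−a)t}/((e^{w₁t}−1)(e^{w₂t}−1)) − 1/(w₁w₂t²) for t > 0, and let t₀ > 0 be such that G₂(a,w,t₀) = 0, G₂(a,w,t) > 0 for 0 < t < t₀ and G₂(a,w,t) < 0 for t > t₀. Then for every real σ with 1 < σ < 2, ∫₀^∞ G₂(a,w,t) (t/t₀)^σ log(t/t₀) (dt/t) < 0. -/

import Mathlib

open MeasureTheory Real Set

/-- The Barnes `G₂` kernel:
`G₂(a, w, t) = e^{(w₁+w₂−a)t}/((e^{w₁t}−1)(e^{w₂t}−1)) − 1/(w₁w₂t²)`. -/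
noncomputable def G₂ (a w₁ w₂ t : ℝ) : ℝ :=
  Real.exp ((w₁ + w₂ - a) * t) / ((Real.exp (w₁ * t) - 1) * (Real.exp (w₂ * t) - 1))
    - 1 / (w₁ * w₂ * t ^ 2)

/-!
Off `t₀` the factors `G₂` and `log (t / t₀)` have opposite signs, so the integrand is negative
almost everywhere. What remains is convergence, without which the Bochner integral would be `0`:
since `G₂(t) = O(1/t)` at `0` and `G₂(t) = O(1/t²)` at `∞`, the logarithmic Mellin integral of `G₂`
converges for `1 < σ < 2`. The bound at `0` comes from `e⁻ˣ ≤ x / (eˣ - 1) ≤ 1` for `x > 0`, which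
squeezes `w₁ w₂ t² G₂(t)` between `e^{-at} - 1` and `e^{(w₁+w₂-a)t} - 1`.
-/

open Filter Asymptotics Topology

theorem integral_neg_of_ae_neg {α : Type*} [MeasurableSpace α] {μ : Measure α} (hμ : μ ≠ 0)
    {f : α → ℝ} (hf : Integrable f μ) (hneg : ∀ᵐ x ∂μ, f x < 0) : ∫ x, f x ∂μ < 0 := by
  have hle : f ≤ᵐ[μ] 0 := hneg.mono fun x hx => hx.le
  refine (integral_nonpos_of_ae hle).lt_of_ne fun hzero => hμ (ae_eq_bot.1 ?_)
  have hf_zero : f =ᵐ[μ] 0 :=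
    (integral_eq_iff_of_ae_le hf (integrable_zero α ℝ μ) hle).1 (by simpa using hzero)
  exact eventually_false_iff_eq_bot.1 <| (hneg.and hf_zero).mono fun x hx => hx.1.ne hx.2

section LogMellin

variable {f : ℝ → ℝ} {c : ℝ}

theorem integrableOn_mul_rpow_mul_log_div {a b σ : ℝ} (hc : 0 < c)
    (hf : LocallyIntegrableOn f (Ioi 0))
    (hf_top : f =O[atTop] (· ^ (-a))) (hσ_top : σ < a)
    (hf_bot : f =O[𝓝[>] 0] (· ^ (-b))) (hσ_bot : b < σ) :
    IntegrableOn (fun t => f t * (t / c) ^ σ * log (t / c) / t) (Ioi 0) := by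
  obtain ⟨a', hσa', ha'⟩ := exists_between hσ_top
  obtain ⟨b', hb', hb'σ⟩ := exists_between hσ_bot
  have hlog : LocallyIntegrableOn (fun t => log t • f t) (Ioi 0) :=
    hf.continuousOn_smul isOpen_Ioi.isLocallyClosed
      (continuousOn_log.mono fun t ht => (mem_Ioi.1 ht).ne')
  have hint : IntegrableOn (fun t => t ^ (σ - 1) * f t) (Ioi 0) :=
    mellin_convergent_of_isBigO_scalar hf hf_top hσ_top hf_bot hσ_bot
  have hint_log : IntegrableOn (fun t => t ^ (σ - 1) * (log t • f t)) (Ioi 0) :=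
    mellin_convergent_of_isBigO_scalar hlog (isBigO_rpow_top_log_smul ha' hf_top) hσa'
      (isBigO_rpow_zero_log_smul hb' hf_bot) hb'σ
  refine IntegrableOn.congr_fun ((hint_log.sub (hint.const_mul (log c))).const_mul (c ^ σ)⁻¹)
    (fun t (ht : 0 < t) => ?_) measurableSet_Ioi
  simp only [Pi.sub_apply, smul_eq_mul]
  rw [rpow_sub_one ht.ne', div_rpow ht.le hc.le, log_div ht.ne' hc.ne']
  ring

theorem mul_rpow_mul_log_div_neg {σ t : ℝ} (hc : 0 < c) (ht : 0 < t) (htc : t ≠ c)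
    (hpos : t < c → 0 < f t) (hneg : c < t → f t < 0) :
    f t * (t / c) ^ σ * log (t / c) / t < 0 := by
  have hrpow : 0 < (t / c) ^ σ := rpow_pos_of_pos (div_pos ht hc) σ
  refine div_neg_of_neg_of_pos ?_ ht
  rcases htc.lt_or_gt with hlt | hgt
  · exact mul_neg_of_pos_of_neg (mul_pos (hpos hlt) hrpow)
      (log_neg (div_pos ht hc) ((div_lt_one hc).2 hlt))
  · exact mul_neg_of_neg_of_pos (mul_neg_of_neg_of_pos (hneg hgt) hrpow)
      (log_pos ((one_lt_div hc).2 hgt))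

end LogMellin

theorem exp_neg_le_div_exp_sub_one {x : ℝ} (hx : 0 < x) : exp (-x) ≤ x / (exp x - 1) := by
  rw [le_div_iff₀ (sub_pos.2 (one_lt_exp_iff.2 hx)), mul_sub, ← exp_add, neg_add_cancel, exp_zero]
  linarith [one_sub_le_exp_neg x]

theorem div_exp_sub_one_le_one {x : ℝ} (hx : 0 < x) : x / (exp x - 1) ≤ 1 := by
  rw [div_le_one (sub_pos.2 (one_lt_exp_iff.2 hx))]
  linarith [add_one_le_exp x]

theorem isBigO_exp_mul_sub_one (c : ℝ) : (fun t => exp (c * t) - 1) =O[𝓝 0] (fun t : ℝ => t) := by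
  have hderiv : HasDerivAt (fun t => exp (c * t)) (exp (c * 0) * (c * 1)) 0 :=
    ((hasDerivAt_id' 0).const_mul c).exp
  simpa using hderiv.isBigO_sub

section Kernel

variable {a w₁ w₂ t : ℝ}

theorem continuousOn_G₂ (hw₁ : w₁ ≠ 0) (hw₂ : w₂ ≠ 0) : ContinuousOn (G₂ a w₁ w₂) {0}ᶜ := by
  have hexp {w t : ℝ} (hw : w ≠ 0) (ht : t ≠ 0) : exp (w * t) - 1 ≠ 0 :=
    sub_ne_zero.2 (mt (exp_eq_one_iff _).1 (mul_ne_zero hw ht))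
  unfold G₂
  refine ContinuousOn.sub (ContinuousOn.div (by fun_prop) (by fun_prop) fun t ht => ?_)
    (ContinuousOn.div (by fun_prop) (by fun_prop) fun t (ht : t ≠ 0) => by positivity)
  exact mul_ne_zero (hexp hw₁ ht) (hexp hw₂ ht)

theorem mul_sq_mul_G₂ (hw₁ : w₁ ≠ 0) (hw₂ : w₂ ≠ 0) (ht : t ≠ 0) :
    w₁ * w₂ * t ^ 2 * G₂ a w₁ w₂ t =
      exp ((w₁ + w₂ - a) * t) *
        (w₁ * t / (exp (w₁ * t) - 1) * (w₂ * t / (exp (w₂ * t) - 1))) - 1 := by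
  rw [G₂, mul_sub, mul_one_div_cancel (by positivity), div_mul_div_comm]
  ring

theorem exp_sub_one_le_mul_sq_mul_G₂ (hw₁ : 0 < w₁) (hw₂ : 0 < w₂) (ht : 0 < t) :
    exp (-a * t) - 1 ≤ w₁ * w₂ * t ^ 2 * G₂ a w₁ w₂ t := by
  rw [mul_sq_mul_G₂ hw₁.ne' hw₂.ne' ht.ne']
  have hexp : exp (-a * t) =
      exp ((w₁ + w₂ - a) * t) * (exp (-(w₁ * t)) * exp (-(w₂ * t))) := by
    rw [← exp_add, ← exp_add]; ring_nf
  have hx₁ := exp_neg_le_div_exp_sub_one (mul_pos hw₁ ht)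
  have hx₂ := exp_neg_le_div_exp_sub_one (mul_pos hw₂ ht)
  rw [hexp]
  gcongr
  exact (exp_pos _).le.trans hx₁

theorem mul_sq_mul_G₂_le_exp_sub_one (hw₁ : 0 < w₁) (hw₂ : 0 < w₂) (ht : 0 < t) :
    w₁ * w₂ * t ^ 2 * G₂ a w₁ w₂ t ≤ exp ((w₁ + w₂ - a) * t) - 1 := by
  rw [mul_sq_mul_G₂ hw₁.ne' hw₂.ne' ht.ne']
  have hx₂ : 0 < w₂ * t := mul_pos hw₂ ht
  gcongr
  refine mul_le_of_le_one_right (exp_pos _).le (mul_le_one₀ ?_ ?_ ?_)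
  · exact div_exp_sub_one_le_one (mul_pos hw₁ ht)
  · exact (exp_pos _).le.trans (exp_neg_le_div_exp_sub_one hx₂)
  · exact div_exp_sub_one_le_one hx₂

theorem isBigO_G₂_nhdsGT_zero (hw₁ : 0 < w₁) (hw₂ : 0 < w₂) :
    G₂ a w₁ w₂ =O[𝓝[>] 0] (· ^ (-1 : ℝ)) := by
  have hscaled : (fun t => w₁ * w₂ * t ^ 2 * G₂ a w₁ w₂ t) =O[𝓝[>] 0] (fun t : ℝ => t) := by
    refine IsBigO.trans ?_ (((isBigO_exp_mul_sub_one (-a)).norm_left.add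
      (isBigO_exp_mul_sub_one (w₁ + w₂ - a)).norm_left).mono nhdsWithin_le_nhds)
    refine IsBigO.of_bound' ?_
    filter_upwards [self_mem_nhdsWithin] with t (ht : 0 < t)
    calc ‖w₁ * w₂ * t ^ 2 * G₂ a w₁ w₂ t‖
        ≤ max ‖exp (-a * t) - 1‖ ‖exp ((w₁ + w₂ - a) * t) - 1‖ :=
          abs_le_max_abs_abs (exp_sub_one_le_mul_sq_mul_G₂ hw₁ hw₂ ht)
            (mul_sq_mul_G₂_le_exp_sub_one hw₁ hw₂ ht)
      _ ≤ ‖exp (-a * t) - 1‖ + ‖exp ((w₁ + w₂ - a) * t) - 1‖ :=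
          max_le_add_of_nonneg (norm_nonneg _) (norm_nonneg _)
      _ ≤ ‖‖exp (-a * t) - 1‖ + ‖exp ((w₁ + w₂ - a) * t) - 1‖‖ := le_norm_self _
  have hinv : (fun t => (w₁ * w₂)⁻¹ * (t ^ 2)⁻¹) =O[𝓝[>] 0] (fun t : ℝ => (t ^ 2)⁻¹) :=
    (isBigO_refl _ _).const_mul_left _
  refine (hinv.mul hscaled).congr' ?_ ?_ <;>
    filter_upwards [self_mem_nhdsWithin] with t (ht : 0 < t)
  · field_simp
  · rw [rpow_neg_one]; field_simp

theorem isBigO_exp_div_exp_sub_one_mul_exp_sub_one (hw₁ : 0 < w₁) (hw₂ : 0 < w₂) :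
    (fun t => exp ((w₁ + w₂ - a) * t) / ((exp (w₁ * t) - 1) * (exp (w₂ * t) - 1)))
      =O[atTop] (fun t => exp (-a * t)) := by
  have hlim {w : ℝ} (hw : 0 < w) : Tendsto (fun t => 1 - exp (-(w * t))) atTop (𝓝 1) := by
    simpa using (tendsto_exp_neg_atTop_nhds_zero.comp
      (tendsto_id.const_mul_atTop hw)).const_sub 1
  have hfactor (w t : ℝ) : exp (w * t) - 1 = exp (w * t) * (1 - exp (-(w * t))) := by
    rw [mul_sub, ← exp_add, add_neg_cancel, exp_zero, mul_one]
  refine isBigO_of_div_tendsto_nhds (.of_forall fun t ht => absurd ht (exp_pos _).ne') _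
    ((((hlim hw₁).mul (hlim hw₂)).inv₀ (by norm_num)).congr fun t => ?_)
  have hexp : exp ((w₁ + w₂ - a) * t) = exp (w₁ * t) * exp (w₂ * t) * exp (-a * t) := by
    rw [← exp_add, ← exp_add]; ring_nf
  rw [Pi.div_apply, hfactor, hfactor, hexp, mul_mul_mul_comm]
  field_simp

theorem isBigO_G₂_atTop (ha : 0 < a) (hw₁ : 0 < w₁) (hw₂ : 0 < w₂) :
    G₂ a w₁ w₂ =O[atTop] (· ^ (-2 : ℝ)) := by
  have hexp : (fun t => exp ((w₁ + w₂ - a) * t) / ((exp (w₁ * t) - 1) * (exp (w₂ * t) - 1)))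
      =O[atTop] (· ^ (-2 : ℝ)) :=
    (isBigO_exp_div_exp_sub_one_mul_exp_sub_one hw₁ hw₂).trans
      (isLittleO_exp_neg_mul_rpow_atTop ha (-2)).isBigO
  have hinv : (fun t => 1 / (w₁ * w₂ * t ^ 2)) =O[atTop] (· ^ (-2 : ℝ)) := by
    refine ((isBigO_refl (fun t : ℝ => t ^ (-2 : ℝ)) atTop).const_mul_left (w₁ * w₂)⁻¹).congr'
      ?_ EventuallyEq.rfl
    filter_upwards [eventually_gt_atTop 0] with t ht
    rw [rpow_neg ht.le, rpow_two, one_div, mul_inv (w₁ * w₂)]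
  exact hexp.sub hinv

end Kernel

theorem stmt17 (w₁ w₂ a : ℝ) (hw₁ : 0 < w₁) (hw₂ : 0 < w₂)
    (ha : 0 < a) (ha' : a < (w₁ + w₂) / 2) (t₀ : ℝ) (ht₀ : 0 < t₀)
    (hzero : G₂ a w₁ w₂ t₀ = 0)
    (hpos : ∀ t : ℝ, 0 < t → t < t₀ → 0 < G₂ a w₁ w₂ t)
    (hneg : ∀ t : ℝ, t₀ < t → G₂ a w₁ w₂ t < 0)
    (σ : ℝ) (hσ : 1 < σ) (hσ' : σ < 2) :
    ∫ t in Set.Ioi (0 : ℝ),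
        G₂ a w₁ w₂ t * (t / t₀) ^ σ * Real.log (t / t₀) / t < 0 := by
  have hcont : ContinuousOn (G₂ a w₁ w₂) (Ioi 0) :=
    (continuousOn_G₂ hw₁.ne' hw₂.ne').mono fun t (ht : 0 < t) => ht.ne'
  have hint : IntegrableOn (fun t => G₂ a w₁ w₂ t * (t / t₀) ^ σ * log (t / t₀) / t) (Ioi 0) :=
    integrableOn_mul_rpow_mul_log_div ht₀
      (hcont.locallyIntegrableOn measurableSet_Ioi)
      (isBigO_G₂_atTop ha hw₁ hw₂) hσ' (isBigO_G₂_nhdsGT_zero hw₁ hw₂) hσ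
  refine integral_neg_of_ae_neg (by simp [Measure.restrict_eq_zero]) hint ?_
  filter_upwards [ae_restrict_mem measurableSet_Ioi, Measure.ae_ne _ t₀] with t ht htt₀
  exact mul_rpow_mul_log_div_neg ht₀ ht htt₀ (hpos t ht) (hneg t)
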